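/- Let n ≥ 9. The stabilizer problem is already undecidable over the integers: there is no computable function which, given as input a finite list X of matrices in GL_n(ℤ) together with a vector u ∈ ℤⁿ, decides whether some non-identity element of the subgroup ⟨X⟩ of GL_n(ℤ) generated by X fixes u. -/

import Mathlib

/-- Integer matrices are primcodable (natural effective encoding of matrices). -/
noncomputable instance matZPrimcodable (n : ℕ) :
    Primcodable (Matrix (Fin n) (Fin n) ℤ) :=
  Primcodable.finArrow

/-!
The halting problem is turned into a stabilizer problem by the following chain of encodings.

A partial recursive function with undecidable domain is computed by a Turing machine with several
stacks. A stack of digits is an integer in base `m`, so the machine becomes a *modular machine*: its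
configurations are pairs `(q, v)` of a state and an integer vector, and a step erases or replaces
the last digit of one coordinate or appends a new digit to it.

In a finitely presented group with commuting elements `x k` and an element `t q` per state, the
configuration `(q, v)` is represented by the *token* `x ^ v * t q * (x ^ v)⁻¹`. Each instruction
contributes an element `ρ` that conjugates the tokens of the configurations it applies to into the
tokens of their successors. One further generator `κ` commutes with all `ρ` and with the terminal
token, hence with every token from which the terminal one is reachable.

A model of this group shows that the other tokens do not even conjugate a nontrivial power of `κ`
to a power of `κ`. It is a wreath product of `SL(2, ℤ)` with the permutations of many copies of the
lattice of integer vectors, whose points are colored according to reachability of the terminal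
configuration. The token of a configuration is the matrix `S` at one point, and `κ` is the matrix
`T` at all points that are not colored.

Over the presented group, Mihailova's fiber product of two free groups is finitely generated, and it
contains `(w κ ^ k w⁻¹, κ ^ l)` if and only if `w` conjugates `κ ^ k` to `κ ^ l` in the presented
group. Finally, a free group acts faithfully on `ℤ²` by fourth powers of transvections along
vectors `(1, c)`, and the stabilizer of such a vector is the cyclic group generated by one free
generator. Hence the stabilizer of the pair `(w • (1, c κ), (1, c κ))` in the fiber product is
nontrivial if and only if the relation above holds, that is, if the machine halts.
-/

open scoped Matrix

section Digits

variable {K : Type*} [DecidableEq K]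

/-- The register contents obtained from `v` by appending the base-`m` digit `d` to register `k`:
`v k` becomes `m * v k + d`, and the other registers keep their contents. -/
def appendDigit (k : K) {m : ℕ} (d : Fin m) (v : K → ℤ) : K → ℤ :=
  Pi.mulSingle k (m : ℤ) * v + Pi.single k (d : ℤ)

theorem appendDigit_eq_update (k : K) {m : ℕ} (d : Fin m) (v : K → ℤ) :
    appendDigit k d v = Function.update v k (m * v k + d) := by
  ext i
  obtain rfl | hi := eq_or_ne i k <;> simp [appendDigit, *]

theorem appendDigit_add (k : K) {m : ℕ} (d : Fin m) (v w : K → ℤ) :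
    appendDigit k d (v + w) = Pi.mulSingle k (m : ℤ) * v + appendDigit k d w := by
  simp only [appendDigit, mul_add, add_assoc]

/-- Splitting off the last base-`m` digit of register `k`, inverse to appending it. -/
def digitEquiv (k : K) (m : ℕ) [NeZero m] : (K → ℤ) × Fin m ≃ (K → ℤ) where
  toFun p := appendDigit k p.2 p.1
  invFun v := (Function.update v k (Int.divModEquiv m (v k)).1, (Int.divModEquiv m (v k)).2)
  left_inv p := by
    have h : (Int.divModEquiv m) (m * p.1 k + p.2) = (p.1 k, p.2) := by
      rw [← Equiv.eq_symm_apply, Int.divModEquiv_symm_apply, mul_comm]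
    simp [appendDigit_eq_update, h]
  right_inv v := by
    have h := (Int.divModEquiv m).symm_apply_apply (v k)
    rw [Int.divModEquiv_symm_apply, mul_comm] at h
    simp only [appendDigit_eq_update, Function.update_self, Function.update_idem, h,
      Function.update_eq_self]

end Digits

/-- A modular machine with registers `K` and control states `Q`. In state `q` it splits off the
last base-`modulus` digit `d` of the integer in register `key q`, moves to the state `next q d` and
appends to the same register the digit `(target q d).2`, written in base `(target q d).1`. Taking
base `1` erases the digit, and taking base `modulus ^ 2` writes two digits at once. -/
structure ModularMachine (K Q : Type*) where
  modulus : ℕ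
  [neZero_modulus : NeZero modulus]
  key : Q → K
  next : Q → Fin modulus → Q
  target : Q → Fin modulus → Σ base : ℕ, Fin base

namespace ModularMachine

attribute [instance] neZero_modulus

variable {K Q : Type*} [DecidableEq K] (M : ModularMachine K Q)

/-- One step of the machine on a configuration, a pair of a state and the register contents. -/
def step (s : Q × (K → ℤ)) : Q × (K → ℤ) :=
  let p := (digitEquiv (M.key s.1) M.modulus).symm s.2
  (M.next s.1 p.2, appendDigit (M.key s.1) (M.target s.1 p.2).2 p.1)

theorem step_appendDigit (q : Q) (d : Fin M.modulus) (v : K → ℤ) :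
    M.step (q, appendDigit (M.key q) d v) =
      (M.next q d, appendDigit (M.key q) (M.target q d).2 v) := by
  have h : (digitEquiv (M.key q) M.modulus).symm (appendDigit (M.key q) d v) = (v, d) :=
    (digitEquiv (M.key q) M.modulus).symm_apply_apply (v, d)
  unfold step
  rw [h]

theorem step_appendDigit_of_target_eq {q : Q} {d : Fin M.modulus} (h : M.target q d = ⟨_, d⟩)
    (v : K → ℤ) :
    M.step (q, appendDigit (M.key q) d v) = (M.next q d, appendDigit (M.key q) d v) := by
  rw [step_appendDigit, h]

theorem exists_eq_appendDigit (s : Q × (K → ℤ)) :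
    ∃ (d : Fin M.modulus) (v : K → ℤ), s = (s.1, appendDigit (M.key s.1) d v) := by
  obtain ⟨⟨v, d⟩, h⟩ := (digitEquiv (M.key s.1) M.modulus).surjective s.2
  exact ⟨d, v, Prod.ext rfl h.symm⟩

/-- The configuration `h` occurs in the run of the machine from `s`. -/
def Reach (s h : Q × (K → ℤ)) : Prop := ∃ n, M.step^[n] s = h

theorem reach_step_iff {s h : Q × (K → ℤ)} (hh : M.step h = h) :
    M.Reach (M.step s) h ↔ M.Reach s h := by
  refine ⟨fun ⟨n, hn⟩ => ⟨n + 1, hn⟩, ?_⟩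
  rintro ⟨_ | n, hn⟩
  · exact ⟨0, by rw [show s = h from hn]; exact hh⟩
  · exact ⟨n, hn⟩

/-- The machine with its states restricted to a set closed under transitions. -/
@[simps]
def restrict (F : Set Q) (hF : ∀ q ∈ F, ∀ d, M.next q d ∈ F) : ModularMachine K F where
  modulus := M.modulus
  key q := M.key q
  next q d := ⟨M.next q d, hF q q.2 d⟩
  target q := M.target q

theorem semiconj_restrict (F : Set Q) (hF : ∀ q ∈ F, ∀ d, M.next q d ∈ F) :
    Function.Semiconj (Prod.map Subtype.val id) (M.restrict F hF).step M.step := fun _ => rfl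

theorem restrict_reach_iff (F : Set Q) (hF : ∀ q ∈ F, ∀ d, M.next q d ∈ F)
    (s h : F × (K → ℤ)) :
    (M.restrict F hF).Reach s h ↔ M.Reach (s.1, s.2) (h.1, h.2) := by
  refine exists_congr fun n => ?_
  rw [← (Subtype.val_injective.prodMap Function.injective_id).eq_iff,
    ((M.semiconj_restrict F hF).iterate_right n).eq]
  rfl

end ModularMachine

/-! ### Simulating multi-stack machines -/

theorem exists_iterate_eq_iff_mem_eval {α : Type*} {f : α → α} {g : α → Option α}
    (hfg : ∀ a, f a = (g a).getD a) {a b : α} (hb : g b = none) :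
    (∃ n, f^[n] a = b) ↔ b ∈ StateTransition.eval g a := by
  simp only [StateTransition.mem_eval, hb, and_true]
  refine ⟨?_, fun h => ?_⟩
  · rintro ⟨n, hn⟩
    induction n generalizing a with
    | zero => exact hn ▸ .refl
    | succ n ih =>
      have h := ih hn
      cases hga : g a <;> simp only [hfg, hga, Option.getD_none, Option.getD_some] at h
      · exact h
      · exact .head hga h
  · induction h using Relation.ReflTransGen.head_induction_on with
    | refl => exact ⟨0, rfl⟩
    | head hac _ ih =>
      obtain ⟨n, hn⟩ := ih
      refine ⟨n + 1, ?_⟩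
      rwa [Function.iterate_succ_apply, hfg, Option.mem_def.1 hac]

section StackCode

variable {K Γ : Type*} [DecidableEq K] [Fintype Γ]

/-- The top of a stack (`none` if it is empty) as a digit in base `card Γ + 1`. The empty stack must
have the digit `0`, since it is coded by `0`. -/
noncomputable def stackDigit : Option Γ ≃ Fin (Fintype.card Γ + 1) :=
  (Fintype.equivFin Γ).optionCongr.trans (finSuccEquiv _).symm

/-- The number whose digits in base `card Γ + 1` are the symbols of the stack, the top being the
last digit. -/
noncomputable def stackCode (l : List Γ) : ℕ :=
  Nat.ofDigits (Fintype.card Γ + 1) (l.map fun a => (stackDigit (some a) : ℕ))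

theorem stackCode_nil : stackCode ([] : List Γ) = 0 := rfl

theorem stackCode_cons (a : Γ) (l : List Γ) :
    stackCode (a :: l) = (Fintype.card Γ + 1) * stackCode l + stackDigit (some a) := by
  simp [stackCode, Nat.ofDigits_cons, add_comm]

theorem stackDigit_head?_add (l : List Γ) :
    (Fintype.card Γ + 1) * stackCode l.tail + stackDigit l.head? = stackCode l := by
  cases l with
  | nil => simp [stackCode_nil, stackDigit]
  | cons a l => exact (stackCode_cons a l).symm

/-- The register contents that represent a family of stacks. -/
noncomputable def stackCodes (S : K → List Γ) : K → ℤ := fun k => stackCode (S k)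

theorem stackCodes_update (S : K → List Γ) (k : K) (l : List Γ) :
    stackCodes (Function.update S k l) = Function.update (stackCodes S) k (stackCode l : ℤ) := by
  ext i
  obtain rfl | hi := eq_or_ne i k <;> simp [stackCodes, *]

theorem appendDigit_stackCodes_tail (S : K → List Γ) (k : K) :
    appendDigit k (stackDigit (S k).head?) (stackCodes (Function.update S k (S k).tail)) =
      stackCodes S := by
  have h : (stackCode (S k) : ℤ) = _ := congrArg Nat.cast (stackDigit_head?_add (S k)).symm
  rw [appendDigit_eq_update, stackCodes_update, Function.update_self, Function.update_idem,
    Function.update_eq_self_iff, stackCodes, h]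
  push_cast
  rfl

theorem appendDigit_stackCodes (S : K → List Γ) (k : K) (a : Γ) :
    appendDigit k (stackDigit (some a)) (stackCodes S) =
      stackCodes (Function.update S k (a :: S k)) := by
  rw [appendDigit_eq_update, stackCodes_update, stackCode_cons]
  push_cast
  rfl

theorem appendDigit_zero (k : K) (v : K → ℤ) : appendDigit k (0 : Fin 1) v = v := by
  simp [appendDigit_eq_update]

theorem appendDigit_finProdFinEquiv (k : K) {m n : ℕ} (d : Fin m) (e : Fin n) (v : K → ℤ) :
    appendDigit k (finProdFinEquiv (d, e)) v = appendDigit k e (appendDigit k d v) := by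
  simp only [appendDigit_eq_update, Function.update_self, Function.update_idem,
    finProdFinEquiv_apply_val]
  push_cast
  ring_nf

end StackCode

namespace ModularMachine

open Turing Function

variable {K Γ Λ σ : Type*} [Fintype Γ]

/-- The modular machine that executes the program `M` of a multi-stack machine one statement per
step. Its states are the statement to be executed, or `none` after halting, with the content of
the internal memory. Pushing a symbol appends a digit behind the one read, and popping erases the
digit read. -/
noncomputable def ofTM2 [Inhabited K] (M : Λ → TM2.Stmt (fun _ : K => Γ) Λ σ) :
    ModularMachine K (Option (TM2.Stmt (fun _ : K => Γ) Λ σ) × σ) where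
  modulus := Fintype.card Γ + 1
  key
    | (some (.push k _ _), _) => k
    | (some (.peek k _ _), _) => k
    | (some (.pop k _ _), _) => k
    | _ => default
  next
    | (some (.push _ _ q), v), _ => (some q, v)
    | (some (.peek _ f q), v), d => (some q, f v (stackDigit.symm d))
    | (some (.pop _ f q), v), d => (some q, f v (stackDigit.symm d))
    | (some (.load f q), v), _ => (some q, f v)
    | (some (.branch p q₁ q₂), v), _ => (some (cond (p v) q₁ q₂), v)
    | (some (.goto f), v), _ => (some (M (f v)), v)
    | (some .halt, v), _ => (none, v)
    | (none, v), _ => (none, v)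
  target
    | (some (.push _ f _), v), d => ⟨_, finProdFinEquiv (d, stackDigit (some (f v)))⟩
    | (some (.pop _ _ _), _), _ => ⟨1, 0⟩
    | _, d => ⟨_, d⟩

variable [DecidableEq K] [Inhabited K] (M : Λ → TM2.Stmt (fun _ : K => Γ) Λ σ)

theorem step_ofTM2 (q : Option (TM2.Stmt (fun _ : K => Γ) Λ σ) × σ) (S : K → List Γ) :
    (ofTM2 M).step (q, stackCodes S) =
      let k := (ofTM2 M).key q
      let d : Fin (ofTM2 M).modulus := stackDigit (S k).head?
      ((ofTM2 M).next q d, appendDigit k ((ofTM2 M).target q d).2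
        (stackCodes (update S k (S k).tail))) := by
  rw [← appendDigit_stackCodes_tail S ((ofTM2 M).key q)]
  exact (ofTM2 M).step_appendDigit q _ _

theorem step_ofTM2_of_target_eq {q : Option (TM2.Stmt (fun _ : K => Γ) Λ σ) × σ}
    (hq : ∀ d, (ofTM2 M).target q d = ⟨_, d⟩) (S : K → List Γ) :
    (ofTM2 M).step (q, stackCodes S) =
      ((ofTM2 M).next q (stackDigit (S ((ofTM2 M).key q)).head?), stackCodes S) := by
  rw [← appendDigit_stackCodes_tail S ((ofTM2 M).key q)]
  exact (ofTM2 M).step_appendDigit_of_target_eq (hq _) _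

theorem step_ofTM2_push (k : K) (f : σ → Γ) (q : TM2.Stmt (fun _ : K => Γ) Λ σ) (v : σ)
    (S : K → List Γ) :
    (ofTM2 M).step ((some (.push k f q), v), stackCodes S) =
      ((some q, v), stackCodes (update S k (f v :: S k))) := by
  rw [step_ofTM2]
  refine Prod.ext rfl ((appendDigit_finProdFinEquiv _ _ _ _).trans ?_)
  rw [← appendDigit_stackCodes, ← appendDigit_stackCodes_tail S k]
  rfl

theorem step_ofTM2_pop (k : K) (f : σ → Option Γ → σ) (q : TM2.Stmt (fun _ : K => Γ) Λ σ) (v : σ)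
    (S : K → List Γ) :
    (ofTM2 M).step ((some (.pop k f q), v), stackCodes S) =
      ((some q, f v (S k).head?), stackCodes (update S k (S k).tail)) := by
  rw [step_ofTM2]
  refine Prod.ext (Prod.ext rfl ?_) (appendDigit_zero _ _)
  exact congrArg (f v) (stackDigit.symm_apply_apply _)

theorem step_ofTM2_peek (k : K) (f : σ → Option Γ → σ) (q : TM2.Stmt (fun _ : K => Γ) Λ σ) (v : σ)
    (S : K → List Γ) :
    (ofTM2 M).step ((some (.peek k f q), v), stackCodes S) =
      ((some q, f v (S k).head?), stackCodes S) := by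
  rw [step_ofTM2_of_target_eq _ fun _ => rfl]
  exact Prod.ext (Prod.ext rfl (congrArg (f v) (stackDigit.symm_apply_apply _))) rfl

theorem step_ofTM2_none (v : σ) (w : K → ℤ) :
    (ofTM2 M).step ((none, v), w) = ((none, v), w) := by
  obtain ⟨d, w, h⟩ := (ofTM2 M).exists_eq_appendDigit ((none, v), w)
  rw [h]
  exact step_appendDigit_of_target_eq _ rfl _

/-- The configuration of `ofTM2 M` that corresponds to a configuration of the stack machine. -/
noncomputable def ofTM2Cfg (c : TM2.Cfg (fun _ : K => Γ) Λ σ) :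
    (Option (TM2.Stmt (fun _ : K => Γ) Λ σ) × σ) × (K → ℤ) :=
  ((c.l.map M, c.var), stackCodes c.stk)

/-- `ModularMachine.step` as a transition function that is undefined on halted configurations. -/
noncomputable def ofTM2Step? (s : (Option (TM2.Stmt (fun _ : K => Γ) Λ σ) × σ) × (K → ℤ)) :
    Option ((Option (TM2.Stmt (fun _ : K => Γ) Λ σ) × σ) × (K → ℤ)) :=
  s.1.1.map fun _ => (ofTM2 M).step s

theorem step_eq_getD_ofTM2Step? (s : (Option (TM2.Stmt (fun _ : K => Γ) Λ σ) × σ) × (K → ℤ)) :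
    (ofTM2 M).step s = (ofTM2Step? M s).getD s := by
  obtain ⟨⟨_ | q, v⟩, w⟩ := s
  · exact step_ofTM2_none M v w
  · rfl

theorem reaches₁_stepAux (q : TM2.Stmt (fun _ : K => Γ) Λ σ) (v : σ) (S : K → List Γ) :
    StateTransition.Reaches₁ (ofTM2Step? M) ((some q, v), stackCodes S)
      (ofTM2Cfg M (TM2.stepAux q v S)) := by
  have mem_step? {q : TM2.Stmt (fun _ : K => Γ) Λ σ} {v : σ} {S : K → List Γ} {s}
      (h : (ofTM2 M).step ((some q, v), stackCodes S) = s) :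
      s ∈ ofTM2Step? M ((some q, v), stackCodes S) := congrArg some h
  induction q generalizing v S with
  | push k f q ih => exact .head (mem_step? (step_ofTM2_push M k f q v S)) (ih _ _)
  | peek k f q ih => exact .head (mem_step? (step_ofTM2_peek M k f q v S)) (ih _ _)
  | pop k f q ih => exact .head (mem_step? (step_ofTM2_pop M k f q v S)) (ih _ _)
  | load f q ih => exact .head (mem_step? (step_ofTM2_of_target_eq M (fun _ => rfl) S)) (ih _ _)
  | branch p q₁ q₂ ih₁ ih₂ =>
    refine .head (mem_step? (step_ofTM2_of_target_eq M (fun _ => rfl) S)) ?_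
    rw [TM2.stepAux]
    cases h : p v <;> simp only [ofTM2, h, cond_true, cond_false]
    · exact ih₂ _ _
    · exact ih₁ _ _
  | goto f => exact .single (mem_step? (step_ofTM2_of_target_eq M (fun _ => rfl) S))
  | halt => exact .single (mem_step? (step_ofTM2_of_target_eq M (fun _ => rfl) S))

theorem respects_ofTM2Step? :
    StateTransition.Respects (TM2.step M) (ofTM2Step? M) fun c s => ofTM2Cfg M c = s := by
  refine StateTransition.fun_respects.2 fun c => ?_
  obtain ⟨_ | l, v, S⟩ := c
  · rfl
  · exact reaches₁_stepAux M (M l) v S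

theorem reach_ofTM2Cfg_iff (c : TM2.Cfg (fun _ : K => Γ) Λ σ) (v : σ) (w : K → ℤ) :
    (ofTM2 M).Reach (ofTM2Cfg M c) ((none, v), w) ↔
      ∃ c' ∈ StateTransition.eval (TM2.step M) c, ofTM2Cfg M c' = ((none, v), w) := by
  rw [← Part.mem_map_iff, ← Part.map_eq_map, ← StateTransition.tr_eval' _ _ _
    (respects_ofTM2Step? M)]
  exact exists_iterate_eq_iff_mem_eval (step_eq_getD_ofTM2Step? M) rfl

omit [DecidableEq K] in
theorem next_ofTM2_mem_stmts {T : Finset Λ} (hT : ∀ l ∈ T, TM2.SupportsStmt T (M l))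
    {s : Option (TM2.Stmt (fun _ : K => Γ) Λ σ) × σ} (hs : s.1 ∈ TM2.stmts M T)
    (d : Fin (ofTM2 M).modulus) : ((ofTM2 M).next s d).1 ∈ TM2.stmts M T := by
  classical
  obtain ⟨_ | q, v⟩ := s
  · exact hs
  have sub {q' : TM2.Stmt (fun _ : K => Γ) Λ σ} (h : q' ∈ TM2.stmts₁ q) :
      some q' ∈ TM2.stmts M T := TM2.stmts_trans h hs
  cases q with
  | push | peek | pop | load => exact sub (by simp [TM2.stmts₁, TM2.stmts₁_self])
  | branch p q₁ q₂ =>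
    simp only [ofTM2]
    cases p v <;> exact sub (by simp [TM2.stmts₁, TM2.stmts₁_self])
  | goto f =>
    obtain ⟨l, hl, hq⟩ := Finset.mem_biUnion.1 (Finset.some_mem_insertNone.1 hs)
    have hf : f v ∈ T := TM2.stmts₁_supportsStmt_mono hq (hT l hl) v
    exact Finset.some_mem_insertNone.2 (Finset.mem_biUnion.2 ⟨f v, hf, TM2.stmts₁_self⟩)
  | halt => exact Finset.none_mem_insertNone

end ModularMachine

theorem primrec_of_halving {α : Type*} [Primcodable α] {f : ℕ → α} {g : ℕ → α → α}
    (hg : Primrec₂ g) (hf : ∀ n ≠ 0, f n = g n (f (n / 2))) : Primrec f := by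
  have step : Primrec₂ fun (_ : Unit) (L : List α) =>
      if L.length = 0 then some (f 0) else (L[L.length / 2]?).map (g L.length) := by
    have length : Primrec fun p : Unit × List α => p.2.length := Primrec.list_length.comp .snd
    exact Primrec.ite (Primrec.eq.comp length (.const 0)) (.const _)
      (Primrec.option_map
        (Primrec.list_getElem?.comp .snd (Primrec.nat_div.comp length (.const 2)))
        (hg.comp (length.comp .fst) .snd))
  have h := Primrec.nat_strong_rec (fun (_ : Unit) n => f n) step fun _ n => by
    rcases eq_or_ne n 0 with rfl | hn
    · simp
    · simp [hn, show n / 2 < n by omega, ← hf n hn]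
  exact h.comp (.const ()) .id

section PartrecToTM2

open Turing Turing.PartrecToTM2

theorem trNat_of_ne_zero {n : ℕ} (hn : n ≠ 0) :
    trNat n = (if n % 2 = 0 then Γ'.bit0 else Γ'.bit1) :: trNat (n / 2) := by
  have trNat_cast (p : PosNum) : trNat p = trPosNum p :=
    congrArg trNum (Num.of_to_nat (.pos p))
  obtain ⟨p, rfl⟩ : ∃ p : PosNum, n = p := by
    cases h : (n : Num) with
    | zero => exact absurd (by rw [← Num.to_of_nat n, h]; rfl) hn
    | pos p => exact ⟨p, by rw [← Num.to_of_nat n, h]; rfl⟩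
  cases p with
  | one => exact (trNat_cast .one).trans (by simp [trPosNum])
  | bit0 p =>
    rw [trNat_cast, PosNum.cast_bit0, if_pos (by omega), ← two_mul,
      Nat.mul_div_cancel_left _ two_pos, trNat_cast, trPosNum]
  | bit1 p =>
    rw [trNat_cast, PosNum.cast_bit1, if_neg (by omega),
      show ((p : ℕ) + p + 1) / 2 = p by omega, trNat_cast, trPosNum]

theorem primrec_stackCode_trList : Primrec fun n => stackCode (trList [n]) := by
  refine primrec_of_halving (g := fun n a => (Fintype.card Γ' + 1) * a +
    if n % 2 = 0 then (stackDigit (some Γ'.bit0) : ℕ) else stackDigit (some Γ'.bit1))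
    ?_ fun n hn => ?_
  · exact Primrec.nat_add.comp (Primrec.nat_mul.comp (.const _) .snd) (Primrec.ite
      (Primrec.eq.comp (Primrec.nat_mod.comp .fst (.const 2)) (.const 0)) (.const _) (.const _))
  · simp only [trList, trNat_of_ne_zero hn, List.cons_append, stackCode_cons]
    split_ifs <;> rfl

theorem exists_code_undecidable_dom :
    ∃ c : ToPartrec.Code, (∀ n, ∀ v ∈ c.eval [n], v = []) ∧
      ¬ ComputablePred fun n => (c.eval [n]).Dom := by
  have hpart : Partrec fun n => Nat.Partrec.Code.eval (Denumerable.ofNat _ n) 0 :=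
    Nat.Partrec.Code.eval_part.comp (Computable.ofNat _) (.const 0)
  obtain ⟨c, hc⟩ := ToPartrec.Code.exists_code (Nat.Partrec'.part_iff₁.2 hpart)
  have heval (n : ℕ) : (ToPartrec.Code.tail.comp c).eval [n] =
      (Nat.Partrec.Code.eval (Denumerable.ofNat _ n) 0).map fun _ => [] := by
    have h : c.eval [n] = _ := hc ⟨[n], rfl⟩
    simp only [ToPartrec.Code.comp_eval, ToPartrec.Code.tail_eval, h]
    simp [Part.bind_some_eq_map, Part.map_map, Function.comp_def, List.Vector.head]
  refine ⟨.comp .tail c, fun n v hv => ?_, fun h => ComputablePred.halting_problem 0 ?_⟩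
  · rw [heval, Part.mem_map_iff] at hv
    obtain ⟨_, _, hv⟩ := hv
    exact hv.symm
  · refine ComputablePred.computable_of_manyOneReducible
      ⟨_, Computable.encode, fun p => ?_⟩ h
    rw [heval, Denumerable.ofNat_encode]
    rfl

theorem stackCodes_elim (l : List Γ') :
    stackCodes (K'.elim l [] [] []) = Pi.single K'.main (stackCode l : ℤ) := by
  ext k
  cases k <;> simp [stackCodes, K'.elim, stackCode_nil]

theorem reach_init_iff_dom {c : ToPartrec.Code} {l : List ℕ} (hc : ∀ v ∈ c.eval l, v = []) :
    (ModularMachine.ofTM2 tr).Reach (ModularMachine.ofTM2Cfg tr (init c l)) ((none, none), 0) ↔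
      (c.eval l).Dom := by
  have hhalt : ModularMachine.ofTM2Cfg tr (halt []) = ((none, none), 0) := by
    refine Prod.ext rfl ((stackCodes_elim []).trans ?_)
    rw [stackCode_nil, Nat.cast_zero, Pi.single_zero]
  refine (ModularMachine.reach_ofTM2Cfg_iff _ _ _ _).trans ?_
  rw [tr_eval, Part.dom_iff_mem]
  refine ⟨fun ⟨_, hmem, _⟩ => ?_, fun ⟨v, hv⟩ => ?_⟩
  · obtain ⟨v, hv, -⟩ := (Part.mem_map_iff _).1 hmem
    exact ⟨v, hv⟩
  · exact ⟨halt [], Part.mem_map halt (hc v hv ▸ hv), hhalt⟩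

theorem exists_modularMachine_undecidable_reach :
    ∃ (Q : Type) (_ : Finite Q) (M : ModularMachine K' Q) (q₀ q₁ : Q) (j : ℕ → ℕ), Primrec j ∧
      M.step (q₁, 0) = (q₁, 0) ∧
      ¬ ComputablePred fun n => M.Reach (q₀, Pi.single K'.main (j n : ℤ)) (q₁, 0) := by
  classical
  obtain ⟨c, hc, hdom⟩ := exists_code_undecidable_dom
  let S := codeSupp c Cont'.halt
  have hS : ∀ l ∈ S, TM2.SupportsStmt S (tr l) := (tr_supports c Cont'.halt).2
  let F : Set (Option (TM2.Stmt (fun _ : K' => Γ') Λ' (Option Γ')) × Option Γ') :=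
    {s | s.1 ∈ TM2.stmts tr S}
  have hF : F.Finite :=
    ((TM2.stmts tr S).finite_toSet.prod Set.finite_univ).subset fun s hs => ⟨hs, trivial⟩
  have h₀ : (some (tr (trNormal c Cont'.halt)), none) ∈ F :=
    Finset.some_mem_insertNone.2 (Finset.mem_biUnion.2
      ⟨_, codeSupp_self _ _ (trStmts₁_self _), TM2.stmts₁_self⟩)
  have h₁ : (none, none) ∈ F := Finset.none_mem_insertNone
  let M := (ModularMachine.ofTM2 tr).restrict F fun _ hq d =>
    ModularMachine.next_ofTM2_mem_stmts tr hS hq d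
  have hinit (n : ℕ) : ModularMachine.ofTM2Cfg tr (init c [n]) =
      ((some (tr (trNormal c Cont'.halt)), none), Pi.single K'.main (stackCode (trList [n]) : ℤ)) :=
    Prod.ext rfl (stackCodes_elim _)
  refine ⟨F, hF.to_subtype, M, ⟨_, h₀⟩, ⟨_, h₁⟩, _, primrec_stackCode_trList, ?_, ?_⟩
  · exact Prod.ext rfl (congrArg Prod.snd
      (ModularMachine.step_ofTM2_none (Λ := Λ') (σ := Option Γ') tr none (0 : K' → ℤ)) :)
  · have hreach (n : ℕ) : M.Reach (⟨_, h₀⟩, Pi.single K'.main (stackCode (trList [n]) : ℤ))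
        (⟨_, h₁⟩, 0) ↔ (c.eval [n]).Dom := by
      refine (ModularMachine.restrict_reach_iff _ _ _ _ _).trans ?_
      rw [← reach_init_iff_dom (hc n), hinit]
      rfl
    simpa only [hreach] using hdom

end PartrecToTM2

/-! ### The group of a modular machine -/

section Monomial

variable {K G : Type*} [Fintype K] [Group G]

/-- The product of the powers `a i ^ w i` of commuting elements of a group. -/
def monomial (a : K → G) (ha : ∀ i j, Commute (a i) (a j)) (w : K → ℤ) : G :=
  MonoidHom.noncommPiCoprod (fun i => zpowersHom G (a i))
    (fun i j _ _ _ => (ha i j).zpow_zpow _ _) fun i => .ofAdd (w i)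

variable {a : K → G} (ha : ∀ i j, Commute (a i) (a j))

theorem monomial_zero : monomial a ha 0 = 1 :=
  map_one (MonoidHom.noncommPiCoprod _ _)

theorem monomial_add (v w : K → ℤ) : monomial a ha (v + w) = monomial a ha v * monomial a ha w :=
  map_mul (MonoidHom.noncommPiCoprod _ _) _ _

theorem monomial_single [DecidableEq K] (i : K) (n : ℤ) :
    monomial a ha (Pi.single i n) = a i ^ n := by
  have h : (fun j => Multiplicative.ofAdd ((Pi.single i n : K → ℤ) j)) =
      (Pi.mulSingle i (.ofAdd n) : K → Multiplicative ℤ) := by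
    ext j
    obtain rfl | hj := eq_or_ne j i <;> simp [*]
  exact (congrArg _ h).trans (MonoidHom.noncommPiCoprod_mulSingle _ i _)

theorem semiconjBy_monomial {g : G} {r s : K → ℤ}
    (h : ∀ i, SemiconjBy g (a i ^ r i) (a i ^ s i)) (w : K → ℤ) :
    SemiconjBy g (monomial a ha (r * w)) (monomial a ha (s * w)) := by
  classical
  rw [← Finset.univ_sum_single w, Finset.mul_sum, Finset.mul_sum]
  induction (Finset.univ : Finset K) using Finset.induction_on with
  | empty => simp [monomial_zero]
  | insert i t hi ih =>
    rw [Finset.sum_insert hi, Finset.sum_insert hi, monomial_add, monomial_add,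
      ← Pi.single_mul_right, ← Pi.single_mul_right, monomial_single, monomial_single,
      zpow_mul, zpow_mul]
    exact ((h i).zpow_right _).mul_right ih

end Monomial

section Relators

variable {G H : Type*} [Group G] [Group H]

/-- The relator of the relation `a * b = c * a`. -/
def conjRelator (a b c : G) : G := a * b * a⁻¹ * c⁻¹

theorem map_conjRelator (f : G →* H) (a b c : G) :
    f (conjRelator a b c) = conjRelator (f a) (f b) (f c) := by
  simp [conjRelator]

theorem conjRelator_eq_one_iff {a b c : G} : conjRelator a b c = 1 ↔ SemiconjBy a b c := by
  rw [conjRelator, mul_inv_eq_one, mul_inv_eq_iff_eq_mul]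
  rfl

end Relators

namespace ModularMachine

variable {K Q : Type*} (M : ModularMachine K Q)

/-- Generators of the group of a modular machine: a register letter `x k` for every register, a
state letter `t q` for every state, a stable letter `ρ q d` for every instruction, and a letter `κ`
that detects halting. -/
inductive Generator
  | x (k : K)
  | t (q : Q)
  | ρ (q : Q) (d : Fin M.modulus)
  | κ

instance [Finite K] [Finite Q] : Finite M.Generator := by
  let f : M.Generator → K ⊕ Q ⊕ (Q × Fin M.modulus) ⊕ Unit
    | .x k => .inl k
    | .t q => .inr (.inl q)
    | .ρ q d => .inr (.inr (.inl (q, d)))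
    | .κ => .inr (.inr (.inr ()))
  refine Finite.of_injective f ?_
  rintro (_ | _ | _ | _) (_ | _ | _ | _) h <;> simp_all [f]

variable {M} {G : Type*} [Group G] [DecidableEq K]

open Generator

/-- The defining relations of the group of a modular machine. A configuration with register
contents `v` and state `q` is represented by the conjugate of `t q` by the monomial in the `x k`
with exponents `v`, and `ρ q d` conjugates the representatives of the configurations in state `q`
with last digit `d` to their successors. -/
structure IsModel (q₁ : Q) (φ : M.Generator → G) : Prop where
  commute (i j : K) : Commute (φ (x i)) (φ (x j))
  scale (q : Q) (d : Fin M.modulus) (i : K) : SemiconjBy (φ (ρ q d))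
    (φ (x i) ^ (Pi.mulSingle (M.key q) (M.modulus : ℤ) : K → ℤ) i)
    (φ (x i) ^ (Pi.mulSingle (M.key q) ((M.target q d).1 : ℤ) : K → ℤ) i)
  move (q : Q) (d : Fin M.modulus) : SemiconjBy (φ (ρ q d))
    (φ (x (M.key q)) ^ (d : ℤ) * φ (t q) * (φ (x (M.key q)) ^ (d : ℤ))⁻¹)
    (φ (x (M.key q)) ^ ((M.target q d).2 : ℤ) * φ (t (M.next q d)) *
      (φ (x (M.key q)) ^ ((M.target q d).2 : ℤ))⁻¹)
  stable (q : Q) (d : Fin M.modulus) : Commute (φ κ) (φ (ρ q d))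
  halt : Commute (φ κ) (φ (t q₁))

variable (M) in
/-- The relators that correspond to the relations `IsModel`. -/
def relators (q₁ : Q) : Set (FreeGroup M.Generator) :=
  (Set.range fun p : K × K => conjRelator (.of (x p.1)) (.of (x p.2)) (.of (x p.2))) ∪
  (Set.range fun p : (Q × Fin M.modulus) × K => conjRelator (.of (ρ p.1.1 p.1.2))
    (.of (x p.2) ^ (Pi.mulSingle (M.key p.1.1) (M.modulus : ℤ) : K → ℤ) p.2)
    (.of (x p.2) ^ (Pi.mulSingle (M.key p.1.1) ((M.target p.1.1 p.1.2).1 : ℤ) : K → ℤ) p.2)) ∪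
  (Set.range fun p : Q × Fin M.modulus => conjRelator (.of (ρ p.1 p.2))
    (.of (x (M.key p.1)) ^ (p.2 : ℤ) * .of (t p.1) * (.of (x (M.key p.1)) ^ (p.2 : ℤ))⁻¹)
    (.of (x (M.key p.1)) ^ ((M.target p.1 p.2).2 : ℤ) * .of (t (M.next p.1 p.2)) *
      (.of (x (M.key p.1)) ^ ((M.target p.1 p.2).2 : ℤ))⁻¹)) ∪
  (Set.range fun p : Q × Fin M.modulus =>
    conjRelator (.of κ) (.of (ρ p.1 p.2)) (.of (ρ p.1 p.2))) ∪
  {conjRelator (.of κ) (.of (t q₁)) (.of (t q₁))}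

theorem finite_relators [Finite K] [Finite Q] (q₁ : Q) : (M.relators q₁).Finite :=
  ((((Set.finite_range _).union (Set.finite_range _)).union (Set.finite_range _)).union
    (Set.finite_range _)).union (Set.finite_singleton _)

theorem isModel_iff {q₁ : Q} {φ : M.Generator → G} :
    IsModel q₁ φ ↔ ∀ r ∈ M.relators q₁, FreeGroup.lift φ r = 1 := by
  simp only [relators, Set.mem_union, or_imp, forall_and, Set.forall_mem_range,
    Set.mem_singleton_iff, forall_eq, Prod.forall, map_conjRelator, map_mul, map_zpow, map_inv,
    FreeGroup.lift_apply_of, conjRelator_eq_one_iff]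
  exact ⟨fun h => ⟨⟨⟨⟨h.commute, h.scale⟩, h.move⟩, h.stable⟩, h.halt⟩,
    fun ⟨⟨⟨⟨h₁, h₂⟩, h₃⟩, h₄⟩, h₅⟩ => ⟨h₁, h₂, h₃, h₄, h₅⟩⟩

theorem isModel_presentedGroup (q₁ : Q) :
    IsModel q₁ (PresentedGroup.of (rels := M.relators q₁)) := by
  have h : FreeGroup.lift (PresentedGroup.of (rels := M.relators q₁)) = PresentedGroup.mk _ := by
    ext
    simp [PresentedGroup.of]
  rw [isModel_iff, h]
  exact fun r hr => PresentedGroup.one_of_mem hr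

/-- The element that represents a configuration: the conjugate of the letter of its state by the
monomial in the register letters whose exponents are the register contents. -/
def token [Fintype K] (φ : M.Generator → G) (hφ : ∀ i j, Commute (φ (x i)) (φ (x j)))
    (s : Q × (K → ℤ)) : G :=
  monomial _ hφ s.2 * φ (t s.1) * (monomial _ hφ s.2)⁻¹

section Token

variable [Fintype K] {φ : M.Generator → G} (hφ : ∀ i j, Commute (φ (x i)) (φ (x j)))

theorem token_single (q : Q) (k : K) (n : ℤ) :
    token φ hφ (q, Pi.single k n) = φ (x k) ^ n * φ (t q) * (φ (x k) ^ n)⁻¹ := by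
  rw [token, monomial_single]

omit [DecidableEq K] in
theorem token_add (q : Q) (v w : K → ℤ) :
    token φ hφ (q, v + w) = monomial _ hφ v * token φ hφ (q, w) * (monomial _ hφ v)⁻¹ := by
  simp only [token, monomial_add, mul_inv_rev, mul_assoc]

end Token

namespace IsModel

variable [Fintype K] {q₁ : Q} {φ : M.Generator → G} (h : IsModel q₁ φ)
include h

theorem semiconjBy_token (q : Q) (d : Fin M.modulus) (v : K → ℤ) :
    SemiconjBy (φ (ρ q d)) (token φ h.commute (q, appendDigit (M.key q) d v))
      (token φ h.commute (M.step (q, appendDigit (M.key q) d v))) := by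
  have hscale := semiconjBy_monomial h.commute (h.scale q d) v
  rw [step_appendDigit, appendDigit, appendDigit, token_add, token_add, token_single, token_single]
  exact (hscale.mul_right (h.move q d)).mul_right hscale.inv_right

theorem commute_token_of_step {s : Q × (K → ℤ)}
    (hs : Commute (φ κ) (token φ h.commute (M.step s))) :
    Commute (φ κ) (token φ h.commute s) := by
  obtain ⟨d, v, hdv⟩ := M.exists_eq_appendDigit s
  have hρ := h.stable s.1 d
  have hconj := h.semiconjBy_token s.1 d v
  rw [← hdv, SemiconjBy, ← eq_inv_mul_iff_mul_eq] at hconj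
  rw [hconj]
  exact hρ.inv_right.mul_right (hs.mul_right hρ)

theorem commute_token_of_reach {s : Q × (K → ℤ)} (hs : M.Reach s (q₁, 0)) :
    Commute (φ κ) (token φ h.commute s) := by
  obtain ⟨n, hn⟩ := hs
  induction n generalizing s with
  | zero =>
    obtain rfl : s = (q₁, 0) := hn
    simpa [token, monomial_zero] using h.halt
  | succ n ih => exact h.commute_token_of_step (ih hn)

end IsModel

end ModularMachine

theorem exists_equiv_of_nonempty_fiber_equiv {X Y Z : Type*} {f : X → Z} {g : Y → Z}
    (h : ∀ z, Nonempty ({a // f a = z} ≃ {b // g b = z})) {x : X} {y : Y} (hxy : f x = g y) :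
    ∃ e : X ≃ Y, (∀ a, g (e a) = f a) ∧ e x = y := by
  classical
  let e : X ≃ Y := Equiv.ofFiberEquiv fun z => (h z).some
  have he (a : X) : g (e a) = f a := Equiv.ofFiberEquiv_map _ a
  refine ⟨e.trans (Equiv.swap (e x) y), fun a => ?_, Equiv.swap_apply_left _ _⟩
  rw [Equiv.trans_apply, Equiv.swap_apply_def]
  split_ifs with hx hy
  · rw [← hxy, ← he, ← he a, hx]
  · rw [he, hxy, ← hy, he]
  · exact he a

section Layers

/-- A family of copies of the lattice `K → ℤ`, called layers. A layer is labelled by a set of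
lattice points, the ones that are colored in this layer, and by an index that only serves to
repeat every pattern of colors often enough. -/
abbrev LayeredLattice (K : Type*) : Type _ := (K → ℤ) × Set (K → ℤ) × Set (K → ℤ)

/-- The colored points of the layered lattice. -/
def LayeredLattice.IsColored {K : Type*} (p : LayeredLattice K) : Prop := p.1 ∈ p.2.1

/-- The translations of the layered lattice, which preserve every layer. -/
def translation (K : Type*) : Multiplicative (K → ℤ) →* Equiv.Perm (LayeredLattice K) where
  toFun v := (Equiv.addLeft v.toAdd).prodCongr (Equiv.refl _)
  map_one' := by ext <;> simp
  map_mul' v w := by ext <;> simp [add_assoc]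

theorem translation_apply {K : Type*} (v w : K → ℤ) (a : Set (K → ℤ) × Set (K → ℤ)) :
    translation K (.ofAdd v) (w, a) = (v + w, a) := rfl

variable {K : Type*} [DecidableEq K]

theorem translation_single_zpow (k : K) (m n : ℤ) :
    translation K (.ofAdd (Pi.single k m)) ^ n = translation K (.ofAdd (Pi.single k (n * m))) := by
  rw [← map_zpow, ← ofAdd_zsmul, ← Pi.single_smul, smul_eq_mul]

/-- The layered lattice divided into cosets: the points of a layer whose register `k` has a given
last base-`m` digit. -/
def cosetEquiv (k : K) (m : ℕ) [NeZero m] :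
    (K → ℤ) × Fin m × Set (K → ℤ) × Set (K → ℤ) ≃ LayeredLattice K :=
  (Equiv.prodAssoc _ _ _).symm.trans ((digitEquiv k m).prodCongr (Equiv.refl _))

theorem cosetEquiv_apply (k : K) {m : ℕ} [NeZero m] (v : K → ℤ) (d : Fin m)
    (a : Set (K → ℤ) × Set (K → ℤ)) : cosetEquiv k m (v, d, a) = (appendDigit k d v, a) := rfl

theorem translation_cosetEquiv (k : K) {m : ℕ} [NeZero m] (v w : K → ℤ)
    (r : Fin m × Set (K → ℤ) × Set (K → ℤ)) :
    translation K (.ofAdd (Pi.mulSingle k (m : ℤ) * v)) (cosetEquiv k m (w, r)) =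
      cosetEquiv k m (v + w, r) := by
  rw [cosetEquiv_apply, cosetEquiv_apply, translation_apply, appendDigit_add]

/-- The pattern of colored points in a coset. -/
def cosetPattern (k : K) {m : ℕ} (r : Fin m × Set (K → ℤ) × Set (K → ℤ)) : Set (K → ℤ) :=
  appendDigit k r.1 ⁻¹' r.2.1

open Cardinal in
theorem mk_cosetPattern_fiber (k : K) (m : ℕ) [NeZero m] (g : Set (K → ℤ)) :
    #{r : Fin m × Set (K → ℤ) × Set (K → ℤ) // cosetPattern k r = g} = #(Set (K → ℤ)) := by
  have : Nonempty K := ⟨k⟩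
  have hω : ℵ₀ ≤ #(Set (K → ℤ)) := aleph0_le_mk _
  refine le_antisymm ((mk_subtype_le _).trans ?_) (mk_le_of_injective
    (f := fun s => ⟨(0, appendDigit k (0 : Fin m) '' g, s), Set.preimage_image_eq g ?_⟩) ?_)
  · rw [mk_prod, ← mul_def, mul_eq_self hω, mk_fin, lift_natCast, lift_uzero]
    exact mul_le_of_le hω (natCast_lt_aleph0.le.trans hω) le_rfl
  · intro v w h
    exact congrArg Prod.fst ((digitEquiv k m).injective (a₁ := (v, 0)) (a₂ := (w, 0)) h)
  · intro s s' h
    exact congrArg (fun r => r.1.2.2) h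

theorem exists_perm_appendDigit (k : K) {m c : ℕ} (d : Fin m) (e : Fin c) {A B : Set (K → ℤ)}
    (hAB : appendDigit k d ⁻¹' A = appendDigit k e ⁻¹' B) :
    ∃ σ : Equiv.Perm (LayeredLattice K),
      (∀ p, (σ p).IsColored ↔ p.IsColored) ∧
      (∀ v, SemiconjBy σ (translation K (.ofAdd ((Pi.mulSingle k (m : ℤ) : K → ℤ) * v)))
        (translation K (.ofAdd ((Pi.mulSingle k (c : ℤ) : K → ℤ) * v)))) ∧
      ∀ v, σ (appendDigit k d v, A, ∅) = (appendDigit k e v, B, ∅) := by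
  have := NeZero.of_pos d.pos
  have := NeZero.of_pos e.pos
  obtain ⟨τ, hτ, hAB⟩ := exists_equiv_of_nonempty_fiber_equiv
    (f := cosetPattern k) (g := cosetPattern k) (x := (d, A, ∅)) (y := (e, B, ∅))
    (fun z => Cardinal.eq.1 (by rw [mk_cosetPattern_fiber, mk_cosetPattern_fiber])) hAB
  let σ := ((cosetEquiv k m).symm.trans ((Equiv.refl _).prodCongr τ)).trans (cosetEquiv k c)
  have hσ (v r) : σ (cosetEquiv k m (v, r)) = cosetEquiv k c (v, τ r) := by simp [σ]
  refine ⟨σ, fun p => ?_, fun v => Equiv.ext fun p => ?_, fun v => ?_⟩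
  · obtain ⟨⟨v, r⟩, rfl⟩ := (cosetEquiv k m).surjective p
    rw [hσ]
    exact Set.ext_iff.1 (hτ r) v
  · obtain ⟨⟨w, r⟩, rfl⟩ := (cosetEquiv k m).surjective p
    simp only [Equiv.Perm.mul_apply, translation_cosetEquiv, hσ]
  · rw [← cosetEquiv_apply, hσ, hAB, cosetEquiv_apply]

end Layers

section LayerGroup

open SemidirectProduct ModularGroup
open scoped MatrixGroups

variable {K : Type*}

/-- The permutational wreath product of `SL(2, ℤ)` with the permutations of the layered lattice. -/
abbrev LayerGroup (K : Type*) : Type _ :=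
  (LayeredLattice K → SL(2, ℤ)) ⋊[mulAutArrow] Equiv.Perm (LayeredLattice K)

/-- The element of the layer group given by the matrix `S` at the point `p`. -/
noncomputable def marker (p : LayeredLattice K) : LayerGroup K :=
  inl (Set.mulIndicator {p} fun _ => S)

/-- The element of the layer group given by the matrix `T` at the points that are not colored. -/
noncomputable def detector (K : Type*) : LayerGroup K :=
  inl (Set.mulIndicator {p | ¬ p.IsColored} fun _ => T)

theorem semiconjBy_inr_marker (σ : Equiv.Perm (LayeredLattice K)) (p : LayeredLattice K) :
    SemiconjBy (inr σ) (marker p) (marker (σ p)) := by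
  rw [SemiconjBy, ← mul_inv_eq_iff_eq_mul, marker, marker, ← map_inv, ← inl_aut]
  congr 1
  ext1 r
  change Set.mulIndicator {p} (fun _ => S) (σ⁻¹ r) = _
  classical
  simp only [Set.mulIndicator_apply, Set.mem_singleton_iff, Equiv.Perm.inv_eq_iff_eq]

theorem commute_detector_inr {σ : Equiv.Perm (LayeredLattice K)}
    (hσ : ∀ p, (σ p).IsColored ↔ p.IsColored) : Commute (detector K) (inr σ) := by
  refine Commute.symm ?_
  rw [Commute, SemiconjBy, ← mul_inv_eq_iff_eq_mul, detector, ← map_inv, ← inl_aut]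
  congr 1
  ext1 p
  have hp : (σ⁻¹ p).IsColored ↔ p.IsColored := by rw [← hσ, ← Equiv.Perm.inv_eq_iff_eq.1 rfl]
  change Set.mulIndicator {p : LayeredLattice K | ¬ p.IsColored} (fun _ => T) (σ⁻¹ p) = _
  classical
  simp only [Set.mulIndicator_apply, Set.mem_ofPred_eq, hp]

theorem commute_detector_marker {p : LayeredLattice K} (hp : p.IsColored) :
    Commute (detector K) (marker p) := by
  refine Commute.map ?_ inl
  ext1 r
  obtain rfl | hr := eq_or_ne r p <;> simp [*]

theorem eq_zero_of_semiconjBy_T_zpow {k l : ℤ} (h : SemiconjBy S (T ^ k) (T ^ l)) :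
    k = 0 ∧ l = 0 := by
  have hmat := congrArg (fun g : SL(2, ℤ) => (g : Matrix (Fin 2) (Fin 2) ℤ)) h.eq
  simp only [Matrix.SpecialLinearGroup.coe_mul, coe_S, coe_T_zpow] at hmat
  exact ⟨by simpa using congrFun₂ hmat 1 1, by simpa using (congrFun₂ hmat 0 0).symm⟩

theorem eq_zero_of_semiconjBy_detector {p : LayeredLattice K} (hp : ¬ p.IsColored) {k l : ℤ}
    (h : SemiconjBy (marker p) (detector K ^ k) (detector K ^ l)) : k = 0 ∧ l = 0 := by
  rw [detector, marker, ← map_zpow, ← map_zpow] at h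
  have h := congrFun (inl_injective ((map_mul inl _ _).trans (h.eq.trans (map_mul inl _ _).symm))) p
  exact eq_zero_of_semiconjBy_T_zpow (by simpa [hp, SemiconjBy] using h)

end LayerGroup

namespace ModularMachine

open Generator SemidirectProduct

variable {K Q : Type*} [DecidableEq K]

/-- The lattice point of a configuration `s`, in the layer whose colored points are the register
contents from which, in the state of `s`, the machine reaches `h`. -/
def layerPoint (M : ModularMachine K Q) (h s : Q × (K → ℤ)) : LayeredLattice K :=
  (s.2, {v | M.Reach (s.1, v) h}, ∅)

theorem isColored_layerPoint {M : ModularMachine K Q} {h s : Q × (K → ℤ)} :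
    (M.layerPoint h s).IsColored ↔ M.Reach s h := Iff.rfl

theorem inr_translation_mul_marker_mul_inv (M : ModularMachine K Q) (h : Q × (K → ℤ)) (q : Q)
    (k : K) (n : ℤ) :
    inr (translation K (.ofAdd (Pi.single k 1))) ^ n * marker (M.layerPoint h (q, 0)) *
      (inr (translation K (.ofAdd (Pi.single k 1))) ^ n)⁻¹ =
    marker (M.layerPoint h (q, Pi.single k n)) := by
  rw [← map_zpow, translation_single_zpow, mul_one, mul_inv_eq_iff_eq_mul,
    (semiconjBy_inr_marker _ _).eq, layerPoint, translation_apply, add_zero]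
  rfl

theorem exists_isModel_layerGroup (M : ModularMachine K Q) {q₁ : Q}
    (hstep : M.step (q₁, 0) = (q₁, 0)) :
    ∃ φ : M.Generator → LayerGroup K, IsModel q₁ φ ∧ φ κ = detector K ∧ ∀ q k (n : ℤ),
      φ (x k) ^ n * φ (t q) * (φ (x k) ^ n)⁻¹ =
        marker (M.layerPoint (q₁, 0) (q, Pi.single k n)) := by
  have hσ (q : Q) (d : Fin M.modulus) := exists_perm_appendDigit (M.key q) d (M.target q d).2
    (A := {v | M.Reach (q, v) (q₁, 0)}) (B := {v | M.Reach (M.next q d, v) (q₁, 0)}) <| by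
      ext v
      change M.Reach _ _ ↔ M.Reach _ _
      rw [← M.reach_step_iff hstep, step_appendDigit]
  choose σ hcolor htrans hmarker using hσ
  let φ : M.Generator → LayerGroup K
    | x k => inr (translation K (.ofAdd (Pi.single k 1)))
    | t q => marker (M.layerPoint (q₁, 0) (q, 0))
    | ρ q d => inr (σ q d)
    | κ => detector K
  have hφ (q : Q) (k : K) (n : ℤ) : φ (x k) ^ n * φ (t q) * (φ (x k) ^ n)⁻¹ =
      marker (M.layerPoint (q₁, 0) (q, Pi.single k n)) :=
    M.inr_translation_mul_marker_mul_inv _ q k n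
  refine ⟨φ, ⟨fun i j => ?_, fun q d i => ?_, fun q d => ?_, fun q d => ?_, ?_⟩, rfl, hφ⟩
  · exact ((Commute.all _ _).map _).map _
  · have h := htrans q d (Pi.single i 1)
    rw [← Pi.single_mul_right, ← Pi.single_mul_right, mul_one, mul_one] at h
    simp only [φ, ← map_zpow inr, translation_single_zpow, mul_one]
    exact h.map inr
  · have h := hmarker q d 0
    rw [appendDigit, appendDigit, mul_zero, mul_zero, zero_add, zero_add] at h
    rw [hφ, hφ, layerPoint, layerPoint, ← h]
    exact semiconjBy_inr_marker _ _
  · exact commute_detector_inr (hcolor q d)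
  · exact commute_detector_marker ⟨0, rfl⟩

theorem exists_semiconjBy_iff_reach [Finite K] (M : ModularMachine K Q) {q₁ : Q}
    (hstep : M.step (q₁, 0) = (q₁, 0)) (q : Q) (k : K) (n : ℤ) :
    (∃ p : ℤ × ℤ, p ≠ 0 ∧ SemiconjBy
      (PresentedGroup.of (rels := M.relators q₁) (x k) ^ n * .of (t q) * (.of (x k) ^ n)⁻¹)
      (.of κ ^ p.1) (.of κ ^ p.2)) ↔ M.Reach (q, Pi.single k n) (q₁, 0) := by
  constructor
  · rintro ⟨p, hp, hsemi⟩
    by_contra hreach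
    obtain ⟨φ, hφ, hκ, hconj⟩ := M.exists_isModel_layerGroup hstep
    have h := hsemi.map (PresentedGroup.toGroup (isModel_iff.1 hφ))
    simp only [map_mul, map_inv, map_zpow, PresentedGroup.toGroup.of, hconj, hκ] at h
    rw [← M.isColored_layerPoint] at hreach
    exact hp (Prod.ext_iff.2 (eq_zero_of_semiconjBy_detector hreach h))
  · intro hreach
    have := Fintype.ofFinite K
    have h := (isModel_presentedGroup q₁).commute_token_of_reach hreach
    rw [token_single] at h
    exact ⟨1, one_ne_zero, h.symm.zpow_right 1⟩

end ModularMachine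

theorem exists_presentation_undecidable_semiconjBy :
    ∃ (α : Type) (_ : Finite α) (rels : Set (FreeGroup α)) (_ : rels.Finite) (x t κ : α),
      ¬ ComputablePred fun n : ℕ => ∃ p : ℤ × ℤ, p ≠ 0 ∧ SemiconjBy
        (PresentedGroup.of (rels := rels) x ^ n * .of t * (.of x ^ n)⁻¹)
        (.of κ ^ p.1) (.of κ ^ p.2) := by
  obtain ⟨Q, _, M, q₀, q₁, j, hj, hstep, hcomp⟩ := exists_modularMachine_undecidable_reach
  have : Finite Turing.PartrecToTM2.K' :=
    Set.finite_univ_iff.1 ((Set.toFinite {.main, .rev, .aux, .stack}).subset fun i _ => by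
      cases i <;> simp)
  refine ⟨M.Generator, inferInstance, M.relators q₁, M.finite_relators q₁, .x .main, .t q₀, .κ,
    fun h => hcomp (ComputablePred.computable_of_manyOneReducible ⟨j, hj.to_comp, fun n => ?_⟩ h)⟩
  simpa only [zpow_natCast] using (M.exists_semiconjBy_iff_reach hstep q₀ _ (j n)).symm

/-! ### Fiber products -/

section FiberProduct

variable {G H : Type*} [Group G] [Group H] {S R : Set G}

/-- Generators of the fiber product `{p | p.1 ≡ p.2 mod ⟪R⟫}` of two copies of a group that is
generated by `S`, as in Mihailova's construction. -/
def fiberProductGenerators (S R : Set G) : Set (G × G) :=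
  (fun s => (s, s)) '' S ∪ Prod.mk 1 '' R

theorem finite_fiberProductGenerators (hS : S.Finite) (hR : R.Finite) :
    (fiberProductGenerators S R).Finite :=
  (hS.image _).union (hR.image _)

theorem diagonal_mem_closure_fiberProductGenerators {g : G} (hg : g ∈ Subgroup.closure S) :
    (g, g) ∈ Subgroup.closure (fiberProductGenerators S R) := by
  have hle : Subgroup.closure S ≤ (Subgroup.closure (fiberProductGenerators S R)).comap
      ((MonoidHom.id G).prod (MonoidHom.id G)) :=
    (Subgroup.closure_le _).2 fun s hs => Subgroup.subset_closure (.inl ⟨s, hs, rfl⟩)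
  exact hle hg

theorem one_prod_mem_closure_fiberProductGenerators (hS : Subgroup.closure S = ⊤) {g : G}
    (hg : g ∈ Subgroup.normalClosure R) :
    (1, g) ∈ Subgroup.closure (fiberProductGenerators S R) := by
  let N := (Subgroup.closure (fiberProductGenerators S R)).comap (MonoidHom.inr G G)
  have hdiag (a : G) := diagonal_mem_closure_fiberProductGenerators (R := R)
    (hS ▸ Subgroup.mem_top a)
  have hN : N.Normal := ⟨fun n hn a => by
    simpa [N] using mul_mem (mul_mem (hdiag a) hn) (inv_mem (hdiag a))⟩
  have hle : Subgroup.normalClosure R ≤ N :=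
    Subgroup.normalClosure_le_normal fun r hr => Subgroup.subset_closure (.inr ⟨r, hr, rfl⟩)
  exact hle hg

theorem mem_closure_fiberProductGenerators (hS : Subgroup.closure S = ⊤) {p : G × G} :
    p ∈ Subgroup.closure (fiberProductGenerators S R) ↔
      (p.1 : G ⧸ Subgroup.normalClosure R) = p.2 := by
  constructor
  · intro hp
    let π := QuotientGroup.mk' (Subgroup.normalClosure R)
    have hle : Subgroup.closure (fiberProductGenerators S R) ≤
        (π.comp (MonoidHom.fst G G)).eqLocus (π.comp (MonoidHom.snd G G)) := by
      rw [Subgroup.closure_le]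
      rintro _ (⟨s, -, rfl⟩ | ⟨r, hr, rfl⟩)
      · rfl
      · exact ((QuotientGroup.eq_one_iff r).2 (Subgroup.subset_normalClosure hr)).symm
    exact hle hp
  · intro hp
    have hdiag := diagonal_mem_closure_fiberProductGenerators (R := R)
      (hS ▸ Subgroup.mem_top p.1)
    simpa using mul_mem hdiag
      (one_prod_mem_closure_fiberProductGenerators hS (QuotientGroup.eq.1 hp))

theorem exists_map_eq_and_conj_mem_zpowers_iff (π : G →* H) {κ : G} (hκ : ¬ IsOfFinOrder κ)
    (w : G) :
    (∃ p : G × G, π p.1 = π p.2 ∧ p ≠ 1 ∧ w⁻¹ * p.1 * w ∈ Subgroup.zpowers κ ∧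
      p.2 ∈ Subgroup.zpowers κ) ↔
    ∃ k : ℤ × ℤ, k ≠ 0 ∧ SemiconjBy (π w) (π κ ^ k.1) (π κ ^ k.2) := by
  have hpow (k : ℤ) : κ ^ k = 1 ↔ k = 0 :=
    (injective_zpow_iff_not_isOfFinOrder.2 hκ).eq_iff' (zpow_zero κ)
  have hsemi (k l : ℤ) : SemiconjBy (π w) (π κ ^ k) (π κ ^ l) ↔
      π (w * κ ^ k * w⁻¹) = π (κ ^ l) := by
    simp only [map_mul, map_inv, map_zpow, mul_inv_eq_iff_eq_mul, SemiconjBy]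
  constructor
  · rintro ⟨⟨g, _⟩, hπ, hne, ⟨k, hk⟩, ⟨l, rfl⟩⟩
    obtain rfl : g = w * κ ^ k * w⁻¹ := by
      simp only at hk
      rw [hk]
      group
    refine ⟨(k, l), fun h => hne ?_, (hsemi k l).2 hπ⟩
    obtain ⟨rfl, rfl⟩ := Prod.ext_iff.1 h
    simp
  · rintro ⟨⟨k, l⟩, hne, h⟩
    refine ⟨(w * κ ^ k * w⁻¹, κ ^ l), (hsemi k l).1 h, fun h1 => hne ?_, ⟨k, by group⟩, ⟨l, rfl⟩⟩
    obtain ⟨hk, hl⟩ := Prod.ext_iff.1 h1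
    exact Prod.ext ((hpow k).1 (conj_eq_one_iff.1 hk)) ((hpow l).1 hl)

end FiberProduct

/-! ### A faithful representation of free groups in `SL₂(ℤ)` -/

section Shear

variable {R : Type*} [CommRing R]

/-- The one-parameter group of transvections of the plane that fix the vector `(1, c)`. -/
def shear (c : R) : Multiplicative R →* Matrix.SpecialLinearGroup (Fin 2) R where
  toFun s := ⟨!![1 - s.toAdd * c, s.toAdd; -s.toAdd * c ^ 2, 1 + s.toAdd * c], by
    rw [Matrix.det_fin_two_of]
    ring⟩
  map_one' := by
    ext i j
    fin_cases i <;> fin_cases j <;> simp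
  map_mul' s t := by
    refine Subtype.ext (Eq.trans ?_ (Matrix.mul_fin_two ..).symm)
    ext i j
    fin_cases i <;> fin_cases j <;> simp <;> ring

theorem coe_shear_ofAdd (c s : R) : (shear c (.ofAdd s) : Matrix (Fin 2) (Fin 2) R) =
    !![1 - s * c, s; -s * c ^ 2, 1 + s * c] := rfl

theorem shear_ofAdd_mulVec (c s : R) (v : Fin 2 → R) :
    (shear c (.ofAdd s)).1 *ᵥ v =
      ![v 0 + s * (v 1 - c * v 0), v 1 + s * (v 1 - c * v 0) * c] := by
  rw [coe_shear_ofAdd]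
  ext i
  fin_cases i <;> simp [Matrix.mulVec, dotProduct] <;> ring

theorem mulVec_eq_self_iff_eq_shear {c : R} {g : Matrix.SpecialLinearGroup (Fin 2) R} :
    g.1 *ᵥ ![1, c] = ![1, c] ↔ g = shear c (.ofAdd (g 0 1)) := by
  constructor
  · intro hg
    have h₀ : g 0 0 + g 0 1 * c = 1 := by
      simpa [Matrix.mulVec, dotProduct] using congrFun hg 0
    have h₁ : g 1 0 + g 1 1 * c = c := by
      simpa [Matrix.mulVec, dotProduct] using congrFun hg 1
    have hdet : g 0 0 * g 1 1 - g 0 1 * g 1 0 = 1 :=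
      (Matrix.det_fin_two _).symm.trans g.det_coe
    refine Subtype.ext ((Matrix.eta_fin_two _).trans ?_)
    rw [coe_shear_ofAdd]
    have h₁₁ : g 1 1 = 1 + g 0 1 * c := by
      linear_combination hdet - g 1 1 * h₀ + g 0 1 * h₁
    have h₀₀ : g 0 0 = 1 - g 0 1 * c := by linear_combination h₀
    have h₁₀ : g 1 0 = -g 0 1 * c ^ 2 := by linear_combination h₁ - c * h₁₁
    rw [h₀₀, h₁₀, h₁₁]
  · intro hg
    rw [hg, shear_ofAdd_mulVec]
    simp

theorem map_shear_ofAdd {R' : Type*} [CommRing R'] (f : R →+* R') (c s : R) :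
    (shear c (.ofAdd s)).map f = shear (f c) (.ofAdd (f s)) := by
  ext i j
  fin_cases i <;> fin_cases j <;> simp [coe_shear_ofAdd]

end Shear

section PingPong

/-- The cone around the line spanned by `(1, c)` which the nontrivial elements of the group
generated by `shear c 4` map the other cones into. -/
def shearCone (c : ℤ) : Set (Fin 2 → ℤ) :=
  {v | 2 * |v 1 - c * v 0| < |v 0|}

theorem lt_of_mem_shearCone {c d : ℤ} (hcd : c ≠ d) {v : Fin 2 → ℤ} (hv : v ∈ shearCone d) :
    |v 0| < 2 * |v 1 - c * v 0| := by
  have hv : 2 * |v 1 - d * v 0| < |v 0| := hv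
  have hsub : 1 ≤ |d - c| := Int.one_le_abs (sub_ne_zero.2 hcd.symm)
  have htri : |d - c| * |v 0| ≤ |v 1 - c * v 0| + |v 1 - d * v 0| := by
    rw [← abs_mul]
    exact (congrArg abs (by ring)).trans_le (abs_sub _ _)
  linarith [le_mul_of_one_le_left (abs_nonneg (v 0)) hsub]

theorem disjoint_shearCone {c d : ℤ} (hcd : c ≠ d) : Disjoint (shearCone c) (shearCone d) :=
  Set.disjoint_left.2 fun v hc hd => by
    have hc : 2 * |v 1 - c * v 0| < |v 0| := hc
    exact hc.not_gt (lt_of_mem_shearCone hcd hd)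

theorem shear_mulVec_mem_shearCone {c d n : ℤ} (hcd : c ≠ d) (hn : n ≠ 0) {v : Fin 2 → ℤ}
    (hv : v ∈ shearCone d) : (shear c (.ofAdd (4 * n))).1 *ᵥ v ∈ shearCone c := by
  have hlt := lt_of_mem_shearCone hcd hv
  rw [shear_ofAdd_mulVec]
  set x := v 1 - c * v 0 with hx
  have hinv : v 1 + 4 * n * x * c - c * (v 0 + 4 * n * x) = x := by
    rw [hx]
    ring
  have hgrow : 4 * |x| ≤ |v 0 + 4 * n * x| + |v 0| :=
    calc 4 * |x| ≤ 4 * |n| * |x| :=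
          mul_le_mul_of_nonneg_right (by linarith [Int.one_le_abs hn]) (abs_nonneg x)
      _ = |(v 0 + 4 * n * x) - v 0| := by rw [add_sub_cancel_left, abs_mul, abs_mul]; rfl
      _ ≤ _ := abs_sub _ _
  change 2 * |v 1 + 4 * n * x * c - c * (v 0 + 4 * n * x)| < |v 0 + 4 * n * x|
  rw [hinv]
  linarith

/-- The representation of a free group on the plane in which the generator `a` acts as the
fourth power of the elementary transvection along `(1, c a)`. -/
def planeRep {α : Type*} (c : α → ℤ) : FreeGroup α →* Matrix.SpecialLinearGroup (Fin 2) ℤ :=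
  FreeGroup.lift fun a => shear (c a) (.ofAdd 4)

variable {α : Type*} {c : α → ℤ}

theorem planeRep_of_zpow (c : α → ℤ) (a : α) (n : ℤ) :
    planeRep c (.of a ^ n) = shear (c a) (.ofAdd (4 * n)) := by
  rw [map_zpow, planeRep, FreeGroup.lift_apply_of, ← map_zpow, ← ofAdd_zsmul, smul_eq_mul,
    mul_comm]

open scoped Pointwise Function in
theorem planeRep_id_injective : Function.Injective (planeRep (id : ℤ → ℤ)) := by
  let f (c : ℤ) : FreeGroup Unit →* ((Fin 2 → ℤ) ≃ₗ[ℤ] (Fin 2 → ℤ)) :=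
    Matrix.SpecialLinearGroup.toLin'.comp ((planeRep id).comp (FreeGroup.map fun _ => c))
  have hf : Matrix.SpecialLinearGroup.toLin'.comp (planeRep id) =
      (Monoid.CoprodI.lift f).comp freeGroupEquivCoprodI.toMonoidHom := by
    ext
    simp [f]
  have hf_apply (c n : ℤ) : f c (FreeGroup.freeGroupUnitEquivInt.symm n) =
      Matrix.SpecialLinearGroup.toLin' (shear c (.ofAdd (4 * n))) := by
    rw [← id_def c, ← planeRep_of_zpow id]
    simp [f, FreeGroup.freeGroupUnitEquivInt]
  refine Function.Injective.of_comp (f := Matrix.SpecialLinearGroup.toLin') ?_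
  rw [← MonoidHom.coe_comp, hf, MonoidHom.coe_comp]
  refine Function.Injective.comp ?_ freeGroupEquivCoprodI.injective
  refine Monoid.CoprodI.lift_injective_of_ping_pong f (.inr ⟨0, ?_⟩) shearCone
    (fun c => ⟨![1, c], ?_⟩) (fun c d hcd => disjoint_shearCone hcd) ?_
  · rw [FreeGroup.freeGroupUnitEquivInt.cardinal_eq, Cardinal.mk_denumerable]
    exact Cardinal.natCast_le_aleph0
  · simp [shearCone]
  · rintro c d hcd h hh _ ⟨v, hv, rfl⟩
    obtain ⟨n, rfl⟩ := FreeGroup.freeGroupUnitEquivInt.symm.surjective h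
    have hn : n ≠ 0 := by
      rintro rfl
      exact hh rfl
    rw [hf_apply]
    exact shear_mulVec_mem_shearCone hcd hn hv

theorem planeRep_injective (hc : Function.Injective c) : Function.Injective (planeRep c) := by
  have h : planeRep c = (planeRep id).comp (FreeGroup.map c) := by
    ext1
    simp [planeRep]
  rw [h]
  exact planeRep_id_injective.comp (FreeGroup.map_injective hc)

theorem four_dvd_planeRep (c : α → ℤ) (g : FreeGroup α) : 4 ∣ planeRep c g 0 1 := by
  have h : (Matrix.SpecialLinearGroup.map (Int.castRingHom (ZMod 4))).comp (planeRep c) = 1 := by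
    refine FreeGroup.ext_hom _ _ fun a => ?_
    rw [MonoidHom.comp_apply, planeRep, FreeGroup.lift_apply_of, map_shear_ofAdd]
    exact map_one _
  have h01 := congrArg (fun M => M 0 1) (DFunLike.congr_fun h g)
  exact (ZMod.intCast_zmod_eq_zero_iff_dvd _ 4).1 h01

theorem planeRep_mulVec_eq_self_iff (hc : Function.Injective c) {κ : α} {g : FreeGroup α} :
    (planeRep c g).1 *ᵥ ![1, c κ] = ![1, c κ] ↔ g ∈ Subgroup.zpowers (.of κ) := by
  constructor
  · intro hg
    obtain ⟨k, hk⟩ := four_dvd_planeRep c g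
    refine ⟨k, planeRep_injective hc ?_⟩
    rw [mulVec_eq_self_iff_eq_shear] at hg
    rw [planeRep_of_zpow, ← hk, ← hg]
  · rintro ⟨k, rfl⟩
    simp only [planeRep_of_zpow, shear_ofAdd_mulVec]
    simp

theorem planeRep_mulVec_mulVec_eq_iff (hc : Function.Injective c) {κ : α} {w g : FreeGroup α} :
    (planeRep c g).1 *ᵥ (planeRep c w).1 *ᵥ ![1, c κ] = (planeRep c w).1 *ᵥ ![1, c κ] ↔
      w⁻¹ * g * w ∈ Subgroup.zpowers (.of κ) := by
  have hmul (g h : FreeGroup α) (v : Fin 2 → ℤ) :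
      (planeRep c g).1 *ᵥ (planeRep c h).1 *ᵥ v = (planeRep c (g * h)).1 *ᵥ v := by
    rw [map_mul, Matrix.mulVec_mulVec]
    rfl
  have hinj : Function.Injective ((planeRep c w⁻¹).1 *ᵥ ·) := by
    refine Function.LeftInverse.injective (g := ((planeRep c w).1 *ᵥ ·)) fun v =>
      (hmul w w⁻¹ v).trans ?_
    rw [mul_inv_cancel, map_one]
    exact Matrix.one_mulVec v
  rw [← planeRep_mulVec_eq_self_iff hc, ← hinj.eq_iff]
  simp only [hmul, inv_mul_cancel, mul_assoc, map_one]
  exact Eq.congr_right (Matrix.one_mulVec _)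

end PingPong

/-! ### Pairs of plane matrices as block matrices -/

section BlockVector

variable {R ι ι' κ ν : Type*} [Zero R]

/-- The vector with two given blocks followed by a block `0`, indexed as in `blockHom`. -/
def blockVector (e : (ι ⊕ ι') ⊕ κ ≃ ν) (v : ι → R) (w : ι' → R) : ν → R :=
  Sum.elim (Sum.elim v w) 0 ∘ e.symm

theorem blockVector_inj (e : (ι ⊕ ι') ⊕ κ ≃ ν) {v v' : ι → R} {w w' : ι' → R} :
    blockVector e v w = blockVector e v' w' ↔ v = v' ∧ w = w' := by
  rw [blockVector, blockVector, e.symm.surjective.injective_comp_right.eq_iff, Sum.elim_eq_iff,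
    Sum.elim_eq_iff, and_iff_left rfl]

theorem primrec_blockVector {m n : ℕ} {α β : Type*} [Primcodable α] [Primcodable β] [Zero β]
    (e : (Fin m ⊕ ι') ⊕ κ ≃ Fin n) {v : α → Fin m → β} (hv : Primrec v) (w : ι' → β) :
    Primrec fun a => blockVector e (v a) w := by
  refine Primrec.fin_curry.2 (Primrec₂.swap (Primrec.fin_curry₁.2 fun i => ?_))
  obtain ⟨(i | i) | i, rfl⟩ := e.surjective i
  · simpa [blockVector, Function.swap] using Primrec.fin_app.comp hv (.const i)
  · simpa [blockVector, Function.swap] using Primrec.const _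
  · simpa [blockVector, Function.swap] using Primrec.const _

end BlockVector

section BlockHom

variable {R ι ι' κ ν : Type*} [CommRing R] [Fintype ι] [Fintype ι'] [Fintype κ] [Fintype ν]
  [DecidableEq ι] [DecidableEq ι'] [DecidableEq κ] [DecidableEq ν]

/-- The embedding of pairs of square matrices as block diagonal matrices with a third block `1`;
`e` says which indices belong to which block. -/
def blockHom (e : (ι ⊕ ι') ⊕ κ ≃ ν) : Matrix ι ι R × Matrix ι' ι' R →* Matrix ν ν R where
  toFun p := Matrix.reindexAlgEquiv R R e
    (Matrix.fromBlocks (Matrix.fromBlocks p.1 0 0 p.2) 0 0 1)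
  map_one' := by simp
  map_mul' p q := by
    rw [← map_mul]
    simp [Matrix.fromBlocks_multiply]

theorem blockHom_injective (e : (ι ⊕ ι') ⊕ κ ≃ ν) :
    Function.Injective (blockHom (R := R) e) := by
  intro p q h
  have h := (Matrix.fromBlocks_inj.1 ((Matrix.reindexAlgEquiv R R e).injective h)).1
  rw [Matrix.fromBlocks_inj] at h
  exact Prod.ext h.1 h.2.2.2

theorem blockHom_mulVec_blockVector (e : (ι ⊕ ι') ⊕ κ ≃ ν) (p : Matrix ι ι R × Matrix ι' ι' R)
    (v : ι → R) (w : ι' → R) :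
    blockHom e p *ᵥ blockVector e v w = blockVector e (p.1 *ᵥ v) (p.2 *ᵥ w) := by
  have h : Matrix.fromBlocks (Matrix.fromBlocks p.1 0 0 p.2) 0 0 (1 : Matrix κ κ R) *ᵥ
      Sum.elim (Sum.elim v w) 0 = Sum.elim (Sum.elim (p.1 *ᵥ v) (p.2 *ᵥ w)) 0 := by
    simp [Matrix.fromBlocks_mulVec, Sum.elim_comp_inl]
  rw [blockVector, blockVector, ← h]
  refine (Matrix.submatrix_mulVec_equiv ..).trans ?_
  rw [Function.comp_assoc, Equiv.symm_symm, Equiv.symm_comp_self, Function.comp_id]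
  rfl

end BlockHom

section PlanePairs

variable {α κ ν : Type*} [Fintype κ] [Fintype ν] [DecidableEq κ] [DecidableEq ν]

/-- The product of two copies of `planeRep c` as a representation by block matrices. -/
def planePairRep (c : α → ℤ) (e : (Fin 2 ⊕ Fin 2) ⊕ κ ≃ ν) :
    FreeGroup α × FreeGroup α →* GL ν ℤ :=
  MonoidHom.toHomUnits <| (blockHom e).comp <|
    (Matrix.SpecialLinearGroup.coeMonoidHom.comp (planeRep c)).prodMap
      (Matrix.SpecialLinearGroup.coeMonoidHom.comp (planeRep c))

theorem planePairRep_injective {c : α → ℤ} (hc : Function.Injective c)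
    (e : (Fin 2 ⊕ Fin 2) ⊕ κ ≃ ν) : Function.Injective (planePairRep c e) := by
  have h : Function.Injective fun g => (planeRep c g).1 :=
    Subtype.val_injective.comp (planeRep_injective hc)
  exact .of_comp (f := Units.val) ((blockHom_injective e).comp (h.prodMap h))

theorem planePairRep_mulVec_eq_self_iff {c : α → ℤ} (hc : Function.Injective c)
    (e : (Fin 2 ⊕ Fin 2) ⊕ κ ≃ ν) {a : α} {w : FreeGroup α} {p : FreeGroup α × FreeGroup α} :
    (planePairRep c e p).1 *ᵥ blockVector e ((planeRep c w).1 *ᵥ ![1, c a]) ![1, c a] =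
        blockVector e ((planeRep c w).1 *ᵥ ![1, c a]) ![1, c a] ↔
      w⁻¹ * p.1 * w ∈ Subgroup.zpowers (.of a) ∧ p.2 ∈ Subgroup.zpowers (.of a) := by
  rw [← planeRep_mulVec_mulVec_eq_iff hc, ← planeRep_mulVec_eq_self_iff hc,
    ← blockVector_inj e, ← blockHom_mulVec_blockVector e ((planeRep c p.1).1, (planeRep c p.2).1)]
  rfl

end PlanePairs

/-! ### Primitive recursive integer arithmetic -/

section PrimrecInt

theorem primrec₂_natCast_sub : Primrec₂ fun a b : ℕ => (a : ℤ) - b := by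
  have hencode : Primrec fun p : ℕ × ℕ =>
      if p.2 ≤ p.1 then 2 * (p.1 - p.2) else 2 * (p.2 - p.1 - 1) + 1 :=
    Primrec.ite (Primrec.nat_le.comp .snd .fst)
      (Primrec.nat_mul.comp (.const 2) (Primrec.nat_sub.comp .fst .snd))
      (Primrec.succ.comp (Primrec.nat_mul.comp (.const 2)
        (Primrec.nat_sub.comp (Primrec.nat_sub.comp .snd .fst) (.const 1))))
  refine Primrec.encode_iff.1 (hencode.of_eq fun ⟨a, b⟩ => ?_)
  dsimp only
  split_ifs with hle
  · rw [← Nat.cast_sub hle]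
    rfl
  · rw [show (a : ℤ) - b = Int.negSucc (b - a - 1) by grind]
    rfl

theorem primrec_int_toNat : Primrec Int.toNat := by
  have hdecode : Primrec fun z : ℤ => bif (Encodable.encode z).bodd then 0
      else (Encodable.encode z).div2 :=
    Primrec.cond (Primrec.nat_bodd.comp .encode) (.const 0) (Primrec.nat_div2.comp .encode)
  refine hdecode.of_eq fun z => ?_
  obtain n | n := z
  · have h : Encodable.encode (n : ℤ) = 2 * n := rfl
    simp [h]
  · have h : Encodable.encode (Int.negSucc n) = 2 * n + 1 := rfl
    simp [h]

theorem primrec_int_toNat_neg : Primrec fun z : ℤ => (-z).toNat := by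
  have hdecode : Primrec fun z : ℤ => bif (Encodable.encode z).bodd
      then (Encodable.encode z).div2 + 1 else 0 :=
    Primrec.cond (Primrec.nat_bodd.comp .encode)
      (Primrec.succ.comp (Primrec.nat_div2.comp .encode)) (.const 0)
  refine hdecode.of_eq fun z => ?_
  obtain n | n := z
  · have h : Encodable.encode (n : ℤ) = 2 * n := rfl
    simp [h]
  · have h : Encodable.encode (Int.negSucc n) = 2 * n + 1 := rfl
    simp [h]

theorem primrec₂_int_add : Primrec₂ fun z w : ℤ => z + w := by
  have h : Primrec fun p : ℤ × ℤ =>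
      ((p.1.toNat + p.2.toNat : ℕ) : ℤ) - ((-p.1).toNat + (-p.2).toNat : ℕ) :=
    primrec₂_natCast_sub.comp
      (Primrec.nat_add.comp (primrec_int_toNat.comp .fst) (primrec_int_toNat.comp .snd))
      (Primrec.nat_add.comp (primrec_int_toNat_neg.comp .fst) (primrec_int_toNat_neg.comp .snd))
  refine h.of_eq fun ⟨z, w⟩ => ?_
  push_cast
  linear_combination z.toNat_sub_toNat_neg + w.toNat_sub_toNat_neg

theorem primrec₂_int_mul : Primrec₂ fun z w : ℤ => z * w := by
  have h : Primrec fun p : ℤ × ℤ =>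
      ((p.1.toNat * p.2.toNat + (-p.1).toNat * (-p.2).toNat : ℕ) : ℤ) -
        (p.1.toNat * (-p.2).toNat + (-p.1).toNat * p.2.toNat : ℕ) :=
    primrec₂_natCast_sub.comp
      (Primrec.nat_add.comp
        (Primrec.nat_mul.comp (primrec_int_toNat.comp .fst) (primrec_int_toNat.comp .snd))
        (Primrec.nat_mul.comp (primrec_int_toNat_neg.comp .fst) (primrec_int_toNat_neg.comp .snd)))
      (Primrec.nat_add.comp
        (Primrec.nat_mul.comp (primrec_int_toNat.comp .fst) (primrec_int_toNat_neg.comp .snd))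
        (Primrec.nat_mul.comp (primrec_int_toNat_neg.comp .fst) (primrec_int_toNat.comp .snd)))
  refine h.of_eq fun ⟨z, w⟩ => ?_
  have hz := z.toNat_sub_toNat_neg
  have hw := w.toNat_sub_toNat_neg
  conv_rhs => rw [← hz, ← hw]
  push_cast
  ring

end PrimrecInt

section PrimrecPlaneRep

variable {α β : Type*} [Primcodable β]

theorem primrec_planeRep_zpow_mulVec (c : α → ℤ) (a : α) {k : β → ℤ} (hk : Primrec k)
    {v : β → Fin 2 → ℤ} (hv : Primrec v) :
    Primrec fun b => (planeRep c (.of a ^ k b)).1 *ᵥ v b := by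
  simp only [planeRep_of_zpow, shear_ofAdd_mulVec]
  have hv' (i : Fin 2) : Primrec fun b => v b i := Primrec.fin_app.comp hv (.const i)
  have hshear : Primrec fun b => 4 * k b * (v b 1 - c a * v b 0) := by
    simp only [sub_eq_add_neg, ← neg_mul]
    exact primrec₂_int_mul.comp (primrec₂_int_mul.comp (.const 4) hk)
      (primrec₂_int_add.comp (hv' 1) (primrec₂_int_mul.comp (.const (-c a)) (hv' 0)))
  refine Primrec.fin_curry.2 (Primrec₂.swap (Primrec.fin_curry₁.2 (Fin.forall_fin_two.2 ⟨?_, ?_⟩)))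
  · exact primrec₂_int_add.comp (hv' 0) hshear
  · exact primrec₂_int_add.comp (hv' 1) (primrec₂_int_mul.comp hshear (.const (c a)))

theorem primrec_planeRep_conj_mulVec (c : α → ℤ) (x t : α) (v : Fin 2 → ℤ) :
    Primrec fun k : ℕ => (planeRep c (.of x ^ k * .of t * (.of x ^ k)⁻¹)).1 *ᵥ v := by
  have hcast : Primrec fun k : ℕ => (k : ℤ) := by
    simpa using primrec₂_natCast_sub.comp .id (.const 0)
  have hneg : Primrec fun k : ℕ => -(k : ℤ) := by
    simpa using primrec₂_natCast_sub.comp (.const 0) .id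
  have h := primrec_planeRep_zpow_mulVec c x hcast <|
    primrec_planeRep_zpow_mulVec c t (.const 1) <| primrec_planeRep_zpow_mulVec c x hneg (.const v)
  refine h.of_eq fun k => ?_
  rw [Matrix.mulVec_mulVec, Matrix.mulVec_mulVec, zpow_one, zpow_neg, zpow_natCast, map_mul,
    map_mul]
  rfl

end PrimrecPlaneRep

theorem exists_list_isUnit_setOf_coe_mem_eq {M : Type*} [Monoid M] {S : Set Mˣ} (hS : S.Finite) :
    ∃ X : List M, (∀ m ∈ X, IsUnit m) ∧ {g : Mˣ | (g : M) ∈ X} = S := by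
  refine ⟨(hS.image Units.val).toFinset.toList, fun m hm => ?_, ?_⟩
  · rw [Finset.mem_toList, Set.Finite.mem_toFinset] at hm
    obtain ⟨g, -, rfl⟩ := hm
    exact g.isUnit
  · ext g
    simp only [Finset.mem_toList, Set.Finite.mem_toFinset, Set.mem_ofPred_eq, Set.mem_image,
      Units.val_inj, exists_eq_right]

theorem exists_mem_closure_planePairRep_fixes_iff {α κ ν : Type*} [Fintype κ] [Fintype ν]
    [DecidableEq κ] [DecidableEq ν] {rels : Set (FreeGroup α)} {c : α → ℤ}
    (hc : Function.Injective c) (e : (Fin 2 ⊕ Fin 2) ⊕ κ ≃ ν) (a : α) (w : FreeGroup α) :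
    let u := blockVector e ((planeRep c w).1 *ᵥ ![1, c a]) ![1, c a]
    (∃ g ∈ Subgroup.closure
        (planePairRep c e '' fiberProductGenerators (Set.range FreeGroup.of) rels),
      g ≠ 1 ∧ g.1 *ᵥ u = u) ↔
    ∃ k : ℤ × ℤ, k ≠ 0 ∧ SemiconjBy (PresentedGroup.mk rels w)
      (.of a ^ k.1) (.of a ^ k.2) := by
  intro u
  have ha : ¬ IsOfFinOrder (FreeGroup.of a) := not_isOfFinOrder_of_isMulTorsionFree
    (FreeGroup.of_ne_one a)
  rw [← MonoidHom.map_closure]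
  refine Iff.trans ?_ (exists_map_eq_and_conj_mem_zpowers_iff (PresentedGroup.mk rels) ha w)
  simp only [Subgroup.mem_map, exists_exists_and_eq_and, u, planePairRep_mulVec_eq_self_iff hc,
    map_ne_one_iff _ (planePairRep_injective hc e),
    mem_closure_fiberProductGenerators (FreeGroup.closure_range_of α)]
  rfl

theorem stabilizer_problem_undecidable_int_general (n : ℕ) (hn : 4 ≤ n) :
    ∃ X : List (Matrix (Fin n) (Fin n) ℤ), (∀ M ∈ X, IsUnit M) ∧
      ¬ ComputablePred fun u : Fin n → ℤ =>
        ∃ g ∈ Subgroup.closure {g : GL (Fin n) ℤ | (g : Matrix (Fin n) (Fin n) ℤ) ∈ X},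
          g ≠ 1 ∧ (g : Matrix (Fin n) (Fin n) ℤ).mulVec u = u := by
  obtain ⟨α, _, rels, hrels, x, t, κ, hundec⟩ := exists_presentation_undecidable_semiconjBy
  obtain ⟨c, hc⟩ := Countable.exists_injective_nat α
  have hc' : Function.Injective fun a => (c a : ℤ) := Nat.cast_injective.comp hc
  let e : (Fin 2 ⊕ Fin 2) ⊕ Fin (n - 4) ≃ Fin n := Fintype.equivOfCardEq (by simp; omega)
  obtain ⟨X, hX, hmem⟩ := exists_list_isUnit_setOf_coe_mem_eq <|
    (finite_fiberProductGenerators (Set.finite_range FreeGroup.of) hrels).image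
      (planePairRep (fun a => (c a : ℤ)) e)
  refine ⟨X, hX, fun h => hundec (ComputablePred.computable_of_manyOneReducible
    ⟨_, (primrec_blockVector e (primrec_planeRep_conj_mulVec (fun a => (c a : ℤ)) x t
      ![1, (c κ : ℤ)]) ![1, (c κ : ℤ)]).to_comp, fun k => ?_⟩ h)⟩
  simp only [hmem, exists_mem_closure_planePairRep_fixes_iff hc']
  simp only [map_mul, map_pow, map_inv]
  rfl

/-- **Undecidability of the stabilizer problem over `ℤ`.**
For `n ≥ 9`, there is no computable function that, given a finite list `X` of
matrices in `GL_n(ℤ)` together with a vector `u ∈ ℤⁿ`, decides whether some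
non-identity element of the subgroup of `GL_n(ℤ)` generated by `X` fixes `u`. -/
theorem stabilizer_problem_undecidable_int (n : ℕ) (hn : 9 ≤ n) :
    ¬ ∃ f : List (Matrix (Fin n) (Fin n) ℤ) × (Fin n → ℤ) → Bool, Computable f ∧
      ∀ (X : List (Matrix (Fin n) (Fin n) ℤ)) (u : Fin n → ℤ),
        (∀ M ∈ X, IsUnit M) →
        (f (X, u) = true ↔
          ∃ g ∈ Subgroup.closure
              {g : GL (Fin n) ℤ | (g : Matrix (Fin n) (Fin n) ℤ) ∈ X},
            g ≠ 1 ∧ (g : Matrix (Fin n) (Fin n) ℤ).mulVec u = u) := by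
  rintro ⟨f, hf, hfX⟩
  obtain ⟨X, hX, hundec⟩ := stabilizer_problem_undecidable_int_general n (by omega)
  exact hundec (ComputablePred.computable_iff.2 ⟨fun u => f (X, u),
    hf.comp ((Computable.const X).pair .id), funext fun u => propext (hfX X u hX).symm⟩)
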